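/- Let f ∈ ℂ[x,y,z] be a reduced homogeneous polynomial of degree d defining a reduced plane curve C: f = 0 in P² which is not a cone, i.e., mdr(f) > 0, where mdr(f) is the minimal degree of a nonzero Jacobian syzygy of f. Set e1 = mdr(f) and e2 = d − 1 − e1, and assume 2e1 ≤ d − 1. Let τ(C) denote the global Tjurina number of C, equal to the eventual constant value of m(f)_k = dim_ℂ (S/J_f)_k for k sufficiently large. Then τ(C) ≤ (e1 + e2)² − e1·e2, and equality holds if and only if C is a free curve, i.e., the syzygy module AR(f) ⊆ S³ is a free graded S-module (of rank 2, with a homogeneous basis of degrees e1, e2). -/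

import Mathlib

open MvPolynomial

noncomputable section

/-- The polynomial ring `S = ℂ[x,y,z]`. -/
abbrev S3 : Type := MvPolynomial (Fin 3) ℂ

/-- The `S`-linear map sending `ρ = (α,β,γ)` to `α fₓ + β f_y + γ f_z`. -/
def jacPair3 (f : S3) : (Fin 3 → S3) →ₗ[S3] S3 where
  toFun ρ := ∑ i, ρ i * pderiv i f
  map_add' a b := by simp [add_mul, Finset.sum_add_distrib]
  map_smul' c a := by simp [Finset.mul_sum, mul_assoc]

/-- `AR(f)`: the `S`-module of all Jacobian syzygies of `f`. -/
def AR3 (f : S3) : Submodule S3 (Fin 3 → S3) := LinearMap.ker (jacPair3 f)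

/-- A vector of polynomials is homogeneous of degree `q` if each component is. -/
def VecHomog3 (ρ : Fin 3 → S3) (q : ℕ) : Prop := ∀ i, (ρ i).IsHomogeneous q

/-- The Jacobian ideal of `f`. -/
def JacIdeal3 (f : S3) : Ideal S3 := Ideal.span (Set.range fun i : Fin 3 => pderiv i f)

/-- `m(f)_k = dim_ℂ M(f)_k`, the dimension of the degree-`k` part of the Milnor algebra. -/
def milnor3 (f : S3) (k : ℕ) : ℕ :=
  Module.finrank ℂ ((homogeneousSubmodule (Fin 3) ℂ k).map
    (Submodule.mkQ ((JacIdeal3 f).restrictScalars ℂ)))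

/-- `C : f = 0` is a free curve with exponents `d1, d2`: `AR(f)` is a free graded
`S`-module with a homogeneous basis of degrees `d1, d2`. -/
def IsFreeCurveWith (f : S3) (d1 d2 : ℕ) : Prop :=
  ∃ ρ1 ρ2 : Fin 3 → S3,
    ρ1 ∈ AR3 f ∧ ρ2 ∈ AR3 f ∧ VecHomog3 ρ1 d1 ∧ VecHomog3 ρ2 d2 ∧
    (∀ ρ ∈ AR3 f, ∃ a b : S3, ρ = a • ρ1 + b • ρ2) ∧
    (∀ a b : S3, a • ρ1 + b • ρ2 = 0 → a = 0 ∧ b = 0)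

/-!
Write `g` for the gradient of `f`, a triple of forms of degree `e₁ + e₂`, and let `ρ` be a syzygy of
degree `e₁`. As `f` is reduced, `g` is primitive, and minimality of `e₁` makes `ρ` primitive. Every
syzygy `θ` of `g` is orthogonal to `g`, as is `ρ`, so `ρ ⨯₃ θ` is a multiple of `g`, and it vanishes
only if `θ` is a multiple of `ρ`. This gives the exact sequence
`0 → S ρ → AR(f) → S g`, and counting dimensions in one large degree gives the inequality.

If equality holds, then `ρ ⨯₃ ·` hits all multiples of `g` by forms of some degree, among them
`x ^ N • g`, `y ^ N • g` and `z ^ N • g`. Since `x ^ N, y ^ N, z ^ N` is a regular sequence, it then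
hits `g` itself; a preimage of degree `e₂` completes `ρ` to a basis of `AR(f)`.
-/

open Module (finrank)
open scoped Matrix

section PrimitiveVectors

/-- A vector over a commutative monoid is primitive if the only common divisors of its entries are
units; for two entries this is `IsRelPrime`. -/
def IsPrimitiveVec {ι R : Type*} [CommMonoid R] (w : ι → R) : Prop :=
  ∀ r, (∀ i, r ∣ w i) → IsUnit r

variable {ι R : Type*} [CommRing R]

lemma IsPrimitiveVec.ne_zero [Nontrivial R] {w : ι → R} (hw : IsPrimitiveVec w) : w ≠ 0 := by
  rintro rfl
  exact not_isUnit_zero (hw 0 fun _ => dvd_rfl)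

lemma IsPrimitiveVec.dvd_of_forall_dvd_mul [UniqueFactorizationMonoid R] [Finite ι]
    {w : ι → R} (hw : IsPrimitiveVec w) {a b : R} (h : ∀ i, a ∣ b * w i) : a ∣ b := by
  cases nonempty_fintype ι
  obtain ⟨_⟩ : Nonempty (NormalizedGCDMonoid R) := inferInstance
  have hgcd : IsUnit (Finset.univ.gcd w) := hw _ fun i => Finset.gcd_dvd (Finset.mem_univ i)
  have hdvd : a ∣ Finset.univ.gcd fun i => b * w i := Finset.dvd_gcd fun i _ => h i
  exact hgcd.dvd_mul_right.1 (hdvd.trans (Finset.gcd_mul_left' _ _ b).dvd)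

variable [IsDomain R] [UniqueFactorizationMonoid R]

lemma IsPrimitiveVec.exists_eq_smul_of_minors_eq_zero [Finite ι] {w : ι → R}
    (hw : IsPrimitiveVec w) {v : ι → R} (h : ∀ i j, v i * w j = v j * w i) :
    ∃ c : R, v = c • w := by
  obtain ⟨k, hk⟩ := Function.ne_iff.1 hw.ne_zero
  obtain ⟨c, hc⟩ : w k ∣ v k := hw.dvd_of_forall_dvd_mul fun i => ⟨v i, by rw [h, mul_comm]⟩
  refine ⟨c, funext fun i => mul_right_cancel₀ hk ?_⟩
  rw [h, hc, Pi.smul_apply, smul_eq_mul, mul_assoc, mul_comm]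

lemma IsPrimitiveVec.exists_eq_smul_of_cross_eq_zero {w : Fin 3 → R} (hw : IsPrimitiveVec w)
    {v : Fin 3 → R} (h : crossProduct w v = 0) : ∃ c : R, v = c • w := by
  have h0 : w 1 * v 2 - w 2 * v 1 = 0 := congrFun h 0
  have h1 : w 2 * v 0 - w 0 * v 2 = 0 := congrFun h 1
  have h2 : w 0 * v 1 - w 1 * v 0 = 0 := congrFun h 2
  refine hw.exists_eq_smul_of_minors_eq_zero fun i j => ?_
  fin_cases i <;> fin_cases j <;> grind

end PrimitiveVectors

section Syzygies

/-- The module of syzygies of a finite family `g` of ring elements: the vectors `ρ` with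
`∑ i, ρ i * g i = 0`. -/
def syzygies {ι R : Type*} [Fintype ι] [CommRing R] (g : ι → R) : Submodule R (ι → R) :=
  LinearMap.ker (Fintype.linearCombination R g)

variable {R : Type*} [CommRing R]

lemma mem_syzygies {ι : Type*} [Fintype ι] {g ρ : ι → R} : ρ ∈ syzygies g ↔ ρ ⬝ᵥ g = 0 :=
  Iff.rfl

lemma mem_syzygies_of_smul_mem {ι : Type*} [Fintype ι] [IsDomain R] {g ρ : ι → R} {c : R}
    (hc : c ≠ 0) (h : c • ρ ∈ syzygies g) : ρ ∈ syzygies g := by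
  rw [mem_syzygies, smul_dotProduct] at h
  exact (smul_eq_zero.1 h).resolve_left hc

lemma mem_syzygies_cross_right (ρ η : Fin 3 → R) : η ∈ syzygies (crossProduct ρ η) :=
  dot_cross_self ρ η

lemma eq_zero_of_smul_add_smul_eq_zero_of_cross_ne_zero [IsDomain R] {ρ η : Fin 3 → R}
    (h : crossProduct ρ η ≠ 0) {a b : R} (hab : a • ρ + b • η = 0) : a = 0 ∧ b = 0 := by
  have ha : a • crossProduct ρ η = 0 := by
    simpa [map_add, LinearMap.add_apply] using congrArg (crossProduct · η) hab
  have hb : b • crossProduct ρ η = 0 := by simpa using congrArg (crossProduct ρ) hab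
  exact ⟨(smul_eq_zero.1 ha).resolve_right h, (smul_eq_zero.1 hb).resolve_right h⟩

variable [IsDomain R] [UniqueFactorizationMonoid R]

lemma exists_cross_eq_smul_of_mem_syzygies {g : Fin 3 → R} (hg : IsPrimitiveVec g)
    {ρ η : Fin 3 → R} (hρ : ρ ∈ syzygies g) (hη : η ∈ syzygies g) :
    ∃ h : R, crossProduct ρ η = h • g := by
  apply hg.exists_eq_smul_of_cross_eq_zero
  rw [cross_cross_eq_smul_sub_smul', dotProduct_comm, mem_syzygies.1 hη, mem_syzygies.1 hρ,
    zero_smul, zero_smul, sub_zero]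

lemma exists_eq_smul_add_smul_of_cross_eq {ρ η g : Fin 3 → R} (hg : IsPrimitiveVec g)
    (hρ : IsPrimitiveVec ρ) (hρg : ρ ∈ syzygies g) (h : crossProduct ρ η = g)
    {θ : Fin 3 → R} (hθ : θ ∈ syzygies g) : ∃ a b : R, θ = a • ρ + b • η := by
  obtain ⟨b, hb⟩ := exists_cross_eq_smul_of_mem_syzygies hg hρg hθ
  obtain ⟨a, ha⟩ := hρ.exists_eq_smul_of_cross_eq_zero (v := θ - b • η)
    (by rw [map_sub, map_smul, h, hb, sub_self])
  exact ⟨a, b, by rw [← ha, sub_add_cancel]⟩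

/-- If `ρ ⨯₃ α = a • g`, `ρ ⨯₃ β = b • g` and `ρ ⨯₃ γ = c • g`, then `b • α - a • β` and its cyclic
analogues are multiples of `ρ`. Their coefficients form a Koszul cycle of the regular sequence
`a, b, c`, hence a boundary, and correcting `α` by it makes `α` divisible by `a`. -/
lemma mem_range_cross_of_smul_mem_range {ρ g : Fin 3 → R} (hρ : IsPrimitiveVec ρ) {a b c : R}
    (ha0 : a ≠ 0) (hab : IsRelPrime a b)
    (hc : ∀ p, c * p ∈ Ideal.span {a, b} → p ∈ Ideal.span {a, b})
    (ha : a • g ∈ LinearMap.range (crossProduct ρ)) (hb : b • g ∈ LinearMap.range (crossProduct ρ))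
    (hcg : c • g ∈ LinearMap.range (crossProduct ρ)) :
    g ∈ LinearMap.range (crossProduct ρ) := by
  obtain ⟨α, hα⟩ := ha
  obtain ⟨β, hβ⟩ := hb
  obtain ⟨γ, hγ⟩ := hcg
  have cocycle {s t : R} {μ ν : Fin 3 → R} (hμ : crossProduct ρ μ = s • g)
      (hν : crossProduct ρ ν = t • g) : ∃ p : R, t • μ - s • ν = p • ρ :=
    hρ.exists_eq_smul_of_cross_eq_zero <| by
      rw [map_sub, map_smul, map_smul, hμ, hν, smul_comm, sub_self]
  obtain ⟨p, hp⟩ := cocycle hα hβ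
  obtain ⟨q, hq⟩ := cocycle hβ hγ
  obtain ⟨r, hr⟩ := cocycle hγ hα
  have hcycle : c * p + a * q + b * r = 0 := by
    refine (smul_eq_zero.1 (?_ : (c * p + a * q + b * r) • ρ = 0)).resolve_right hρ.ne_zero
    rw [add_smul, add_smul, mul_smul, mul_smul, mul_smul, ← hp, ← hq, ← hr]
    module
  obtain ⟨u, v, huv⟩ : ∃ u v, u * a + v * b = p := Ideal.mem_span_pair.1 <| hc p <|
    Ideal.mem_span_pair.2 ⟨-q, -r, by linear_combination -hcycle⟩
  have hcorrected : b • (α - v • ρ) = a • (β + u • ρ) := by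
    rw [← huv] at hp
    linear_combination (norm := module) hp
  have hdvd (i : Fin 3) : a ∣ (α - v • ρ) i :=
    hab.dvd_of_dvd_mul_left ⟨(β + u • ρ) i, congrFun hcorrected i⟩
  choose η hη using hdvd
  have haη : a • η = α - v • ρ := (funext hη).symm
  refine ⟨η, smul_right_injective _ ha0 (?_ : a • crossProduct ρ η = a • g)⟩
  rw [← map_smul, haη, map_sub, map_smul, cross_self, smul_zero, sub_zero, hα]

end Syzygies

section HomogeneousPolynomials

variable {σ R K : Type*} [CommRing R] [Field K]

lemma homogeneousComponent_add_mul {g : MvPolynomial σ R} {j : ℕ} (hg : g.IsHomogeneous j) (i : ℕ)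
    (p : MvPolynomial σ R) :
    homogeneousComponent (i + j) (p * g) = homogeneousComponent i p * g := by
  let := gradedAlgebra (σ := σ) (R := R)
  simp only [← decomposition.decompose'_apply]
  exact DirectSum.coe_decompose_mul_add_of_right_mem (homogeneousSubmodule σ R) hg

lemma finrank_homogeneousSubmodule [Fintype σ] [Nontrivial R] (n : ℕ) :
    finrank R (homogeneousSubmodule σ R n) = (Fintype.card σ).multichoose n := by
  classical
  have hexponents : {m : σ →₀ ℕ | m.degree = n} =
      ((Finset.univ.finsuppAntidiag n : Finset (σ →₀ ℕ)) : Set (σ →₀ ℕ)) := by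
    ext m
    simp [Finset.mem_finsuppAntidiag, Finsupp.degree_eq_sum]
  rw [homogeneousSubmodule_eq_finsupp_supported,
    (AddMonoidAlgebra.supportedEquivFinsupp (R := R) (S := R) _).finrank_eq, hexponents,
    Module.finrank_finsupp_self, ← Finset.card_univ (α := σ),
    ← Finset.card_finsuppAntidiag_nat_eq_multichoose]
  simp

lemma two_mul_multichoose_three (n : ℕ) : 2 * Nat.multichoose 3 n = (n + 1) * (n + 2) := by
  induction n with
  | zero => simp
  | succ n ih =>
    rw [Nat.multichoose_succ_succ, Nat.multichoose_two]
    linarith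

instance finiteDimensional_homogeneousSubmodule [Finite σ] (n : ℕ) :
    FiniteDimensional K (homogeneousSubmodule σ K n) :=
  Module.Finite.iff_fg.2 (homogeneousSubmodule_fg σ K n)

lemma isUnit_of_totalDegree_eq_zero {p : MvPolynomial σ K} (hp : p ≠ 0) (h : p.totalDegree = 0) :
    IsUnit p := by
  rw [totalDegree_eq_zero_iff_eq_C] at h
  rw [h] at hp ⊢
  exact (IsUnit.mk0 _ fun h0 => hp (by rw [h0, C_0])).map C

lemma mem_span_X_pow_pair_iff {i j : σ} {a b : ℕ} {p : MvPolynomial σ R} :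
    p ∈ Ideal.span {X i ^ a, X j ^ b} ↔ ∀ m ∈ p.support, a ≤ m i ∨ b ≤ m j := by
  simpa [X_pow_eq_monomial, Set.image_pair, Finsupp.single_le_iff] using
    mem_ideal_span_monomial_image (x := p) (s := {Finsupp.single i a, Finsupp.single j b})

lemma mem_span_X_pow_pair_of_X_pow_mul_mem {i j k : σ} (hki : k ≠ i) (hkj : k ≠ j) {a b c : ℕ}
    {p : MvPolynomial σ R} (h : X k ^ c * p ∈ Ideal.span {X i ^ a, X j ^ b}) :
    p ∈ Ideal.span {X i ^ a, X j ^ b} := by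
  classical
  rw [mem_span_X_pow_pair_iff] at h ⊢
  intro m hm
  have hshift : m + Finsupp.single k c ∈ (X k ^ c * p).support := by
    rwa [mem_support_iff, X_pow_eq_monomial, add_comm, coeff_monomial_mul, one_mul,
      ← mem_support_iff]
  simpa [Finsupp.single_apply, hki, hkj] using h _ hshift

lemma isRelPrime_X_pow {i j : σ} (hij : i ≠ j) (a b : ℕ) :
    IsRelPrime (X i ^ a : MvPolynomial σ K) (X j ^ b) :=
  ((X_prime.irreducible.isRelPrime_iff_not_dvd).2 fun h => hij (by simpa using h)).pow

end HomogeneousPolynomials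

section Gradient

variable {σ K : Type*} [Field K]

lemma totalDegree_pderiv_lt {R : Type*} [CommSemiring R] {p : MvPolynomial σ R} {i : σ}
    (h : pderiv i p ≠ 0) : (pderiv i p).totalDegree < p.totalDegree := by
  obtain ⟨m, hm, hmax⟩ := Finset.exists_mem_eq_sup _ (support_nonempty.2 h) Finsupp.degree
  rw [mem_support_iff, coeff_pderiv] at hm
  calc (pderiv i p).totalDegree = m.degree := by rw [totalDegree, ← hmax]; rfl
    _ < (m + Finsupp.single i 1).degree := by simp
    _ ≤ p.totalDegree := le_totalDegree (mem_support_iff.2 (left_ne_zero_of_mul hm))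

lemma pderiv_eq_zero_of_dvd {R : Type*} [CommRing R] [IsDomain R] {p : MvPolynomial σ R} {i : σ}
    (h : p ∣ pderiv i p) : pderiv i p = 0 := by
  by_contra h0
  exact (totalDegree_pderiv_lt h0).not_ge (totalDegree_le_of_dvd_of_isDomain h h0)

lemma totalDegree_eq_zero_of_forall_pderiv_eq_zero {R : Type*} [CommRing R] [IsDomain R]
    [CharZero R] {p : MvPolynomial σ R} (h : ∀ i, pderiv i p = 0) : p.totalDegree = 0 := by
  refine (totalDegree_eq_zero_iff σ p).2 fun m hm i => by_contra fun hi => ?_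
  obtain ⟨n, rfl⟩ : ∃ n, m = n + Finsupp.single i 1 :=
    ⟨_, (tsub_add_cancel_of_le (by simpa [Nat.one_le_iff_ne_zero] using hi)).symm⟩
  have hcoeff := coeff_pderiv (i := i) p n
  rw [h, coeff_zero, eq_comm] at hcoeff
  exact mul_ne_zero (mem_support_iff.1 hm) (Nat.cast_add_one_ne_zero _) hcoeff

lemma isPrimitiveVec_pderiv [Finite σ] [CharZero K] {f : MvPolynomial σ K} {d : ℕ} (hd : d ≠ 0)
    (hf : f.IsHomogeneous d) (hsq : Squarefree f) : IsPrimitiveVec fun i => pderiv i f := by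
  cases nonempty_fintype σ
  intro r hr
  have hrf : r ∣ f := by
    have hdf : r ∣ (d : MvPolynomial σ K) * f := by
      rw [← nsmul_eq_mul, ← hf.sum_X_mul_pderiv]
      exact Finset.dvd_sum fun i _ => (hr i).mul_left _
    have hunit : IsUnit (d : MvPolynomial σ K) := by
      rw [← map_natCast (C : K →+* MvPolynomial σ K)]
      exact (IsUnit.mk0 _ (Nat.cast_ne_zero.2 hd)).map C
    exact hunit.dvd_mul_left.1 hdf
  obtain ⟨s, rfl⟩ := hrf
  have hpderiv (i : σ) : pderiv i r = 0 := by
    have hdvd : r ∣ pderiv i r * s + r * pderiv i s := pderiv_mul (R := K) ▸ hr i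
    exact pderiv_eq_zero_of_dvd <| (IsRelPrime.of_squarefree_mul hsq).dvd_of_dvd_mul_right <|
      (dvd_add_left (dvd_mul_right r _)).1 hdvd
  exact isUnit_of_totalDegree_eq_zero (left_ne_zero_of_mul hsq.ne_zero)
    (totalDegree_eq_zero_of_forall_pderiv_eq_zero hpderiv)

end Gradient

section HomogeneousVectors

variable {ι σ R : Type*} [CommRing R]

/-- A vector of polynomials is homogeneous of degree `n` if all its entries are. -/
def IsHomogeneousVec (v : ι → MvPolynomial σ R) (n : ℕ) : Prop :=
  ∀ i, (v i).IsHomogeneous n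

/-- The homogeneous component of degree `n` of a vector of polynomials, taken entrywise. -/
def vecComponent (n : ℕ) (v : ι → MvPolynomial σ R) : ι → MvPolynomial σ R :=
  fun i => homogeneousComponent n (v i)

lemma isHomogeneousVec_vecComponent (n : ℕ) (v : ι → MvPolynomial σ R) :
    IsHomogeneousVec (vecComponent n v) n :=
  fun i => homogeneousComponent_isHomogeneous n (v i)

lemma IsHomogeneousVec.vecComponent_eq_self {v : ι → MvPolynomial σ R} {n : ℕ}
    (hv : IsHomogeneousVec v n) : vecComponent n v = v :=
  funext fun i => homogeneousComponent_eq_self (hv i)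

lemma IsHomogeneousVec.smul {w : ι → MvPolynomial σ R} {p : MvPolynomial σ R} {n k : ℕ}
    (hp : p.IsHomogeneous n) (hw : IsHomogeneousVec w k) : IsHomogeneousVec (p • w) (n + k) :=
  fun i => hp.mul (hw i)

lemma IsHomogeneousVec.cross {v w : Fin 3 → MvPolynomial σ R} {n k : ℕ}
    (hv : IsHomogeneousVec v n) (hw : IsHomogeneousVec w k) :
    IsHomogeneousVec (v ⨯₃ w) (n + k) := by
  intro i
  rw [cross_apply]
  fin_cases i <;> exact ((hv _).mul (hw _)).sub ((hv _).mul (hw _))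

lemma vecComponent_add_smul {w : ι → MvPolynomial σ R} {k : ℕ} (hw : IsHomogeneousVec w k)
    (n : ℕ) (p : MvPolynomial σ R) :
    vecComponent (n + k) (p • w) = homogeneousComponent n p • w :=
  funext fun i => homogeneousComponent_add_mul (hw i) n p

lemma vecComponent_add_cross {v : Fin 3 → MvPolynomial σ R} {k : ℕ} (hv : IsHomogeneousVec v k)
    (n : ℕ) (w : Fin 3 → MvPolynomial σ R) :
    vecComponent (n + k) (v ⨯₃ w) = v ⨯₃ vecComponent n w := by
  have hmul (i j : Fin 3) :
      homogeneousComponent (n + k) (v i * w j) = v i * homogeneousComponent n (w j) := by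
    rw [mul_comm, homogeneousComponent_add_mul (hv i), mul_comm]
  funext i
  simp only [vecComponent, cross_apply]
  fin_cases i <;> simp [hmul]

lemma homogeneousComponent_add_dotProduct [Fintype ι] {w : ι → MvPolynomial σ R} {k : ℕ}
    (hw : IsHomogeneousVec w k) (n : ℕ) (v : ι → MvPolynomial σ R) :
    homogeneousComponent (n + k) (v ⬝ᵥ w) = vecComponent n v ⬝ᵥ w := by
  simp only [dotProduct, map_sum, homogeneousComponent_add_mul (hw _), vecComponent]

lemma vecComponent_mem_syzygies [Fintype ι] {g ρ : ι → MvPolynomial σ R} {k : ℕ}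
    (hg : IsHomogeneousVec g k) (hρ : ρ ∈ syzygies g) (n : ℕ) : vecComponent n ρ ∈ syzygies g := by
  rw [mem_syzygies, ← homogeneousComponent_add_dotProduct hg, mem_syzygies.1 hρ, map_zero]

lemma isPrimitiveVec_of_forall_le_degree {K : Type*} [Field K] [Fintype ι]
    {g ρ : ι → MvPolynomial σ K} {k n : ℕ} (hg : IsHomogeneousVec g k) (hρ : ρ ∈ syzygies g)
    (hρ0 : ρ ≠ 0) (hρn : IsHomogeneousVec ρ n)
    (hmin : ∀ θ ∈ syzygies g, ∀ q, θ ≠ 0 → IsHomogeneousVec θ q → n ≤ q) : IsPrimitiveVec ρ := by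
  intro r hr
  choose θ hθ using hr
  obtain rfl : ρ = r • θ := funext hθ
  obtain ⟨hr0, hθ0⟩ := smul_ne_zero_iff.1 hρ0
  obtain ⟨i, hi⟩ := Function.ne_iff.1 hθ0
  obtain ⟨q, hq, hqi⟩ : ∃ q ∈ Finset.range ((θ i).totalDegree + 1),
      homogeneousComponent q (θ i) ≠ 0 :=
    Finset.exists_ne_zero_of_sum_ne_zero ((sum_homogeneousComponent (θ i)).trans_ne hi)
  have hnq : n ≤ q := hmin (vecComponent q θ)
    (vecComponent_mem_syzygies hg (mem_syzygies_of_smul_mem hr0 hρ) q) q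
    (fun h => hqi (congrFun h i)) (isHomogeneousVec_vecComponent q θ)
  have hdegree : r.totalDegree + (θ i).totalDegree = n := by
    rw [← totalDegree_mul_of_isDomain hr0 hi]
    exact (hρn i).totalDegree (mul_ne_zero hr0 hi)
  have hqθ : q ≤ (θ i).totalDegree := Finset.mem_range_succ_iff.1 hq
  exact isUnit_of_totalDegree_eq_zero hr0 (by omega)

end HomogeneousVectors

section GradedPieces

lemma finrank_map_add_finrank_inf_ker {K V W : Type*} [Field K] [AddCommGroup V] [Module K V]
    [AddCommGroup W] [Module K W] (f : V →ₗ[K] W) (p : Submodule K V) [FiniteDimensional K p] :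
    finrank K (p.map f) + finrank K (p ⊓ LinearMap.ker f : Submodule K V) = finrank K p := by
  rw [← LinearMap.finrank_range_add_finrank_ker (f.domRestrict p), LinearMap.range_domRestrict,
    ← Submodule.map_comap_subtype, Submodule.finrank_map_subtype_eq]
  rfl

variable {ι σ K : Type*} [Field K]

variable (ι σ K) in
/-- The space of homogeneous vectors of degree `n`. -/
def homogeneousVectors (n : ℕ) : Submodule K (ι → MvPolynomial σ K) :=
  Submodule.pi Set.univ fun _ => homogeneousSubmodule σ K n

lemma mem_homogeneousVectors {v : ι → MvPolynomial σ K} {n : ℕ} :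
    v ∈ homogeneousVectors ι σ K n ↔ IsHomogeneousVec v n := by
  simp [homogeneousVectors, IsHomogeneousVec]

lemma homogeneousVectors_eq_range (n : ℕ) : homogeneousVectors ι σ K n =
    LinearMap.range ((homogeneousSubmodule σ K n).subtype.compLeft ι) := by
  rw [LinearMap.range_compLeft, Submodule.range_subtype, homogeneousVectors]

instance finiteDimensional_homogeneousVectors [Finite ι] [Finite σ] (n : ℕ) :
    FiniteDimensional K (homogeneousVectors ι σ K n) := by
  rw [homogeneousVectors_eq_range]
  infer_instance

lemma finrank_homogeneousVectors [Fintype ι] [Finite σ] (n : ℕ) :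
    finrank K (homogeneousVectors ι σ K n) =
      Fintype.card ι * finrank K (homogeneousSubmodule σ K n) := by
  rw [homogeneousVectors_eq_range, LinearMap.finrank_range_of_inj, Module.finrank_pi_fintype,
    Finset.sum_const, Finset.card_univ, smul_eq_mul]
  exact Subtype.val_injective.comp_left

/-- The degree-`n` part of the rank-one free submodule spanned by `w`, graded by the degree of the
coefficient: the vectors `p • w` with `p` homogeneous of degree `n`. -/
def homogeneousMultiples (w : ι → MvPolynomial σ K) (n : ℕ) : Submodule K (ι → MvPolynomial σ K) :=
  (homogeneousSubmodule σ K n).map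
    ((LinearMap.toSpanSingleton (MvPolynomial σ K) _ w).restrictScalars K)

lemma smul_mem_homogeneousMultiples (w : ι → MvPolynomial σ K) {p : MvPolynomial σ K} {n : ℕ}
    (hp : p.IsHomogeneous n) : p • w ∈ homogeneousMultiples w n :=
  ⟨p, hp, rfl⟩

instance finiteDimensional_homogeneousMultiples [Finite σ] (w : ι → MvPolynomial σ K) (n : ℕ) :
    FiniteDimensional K (homogeneousMultiples w n) := by
  rw [homogeneousMultiples]
  infer_instance

lemma finrank_homogeneousMultiples {w : ι → MvPolynomial σ K} (hw : w ≠ 0) (n : ℕ) :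
    finrank K (homogeneousMultiples w n) = finrank K (homogeneousSubmodule σ K n) :=
  (Submodule.equivMapOfInjective _ (smul_left_injective (MvPolynomial σ K) hw) _).finrank_eq.symm

lemma smul_mem_homogeneousMultiples_of_isHomogeneousVec {w : ι → MvPolynomial σ K} {k n : ℕ}
    (hw : IsHomogeneousVec w k) {p : MvPolynomial σ K} (hp : IsHomogeneousVec (p • w) (n + k)) :
    p • w ∈ homogeneousMultiples w n := by
  rw [← hp.vecComponent_eq_self, vecComponent_add_smul hw]
  exact smul_mem_homogeneousMultiples w (homogeneousComponent_isHomogeneous n p)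

variable [Fintype ι]

/-- The space of homogeneous syzygies of degree `n`. -/
def homogeneousSyzygies (g : ι → MvPolynomial σ K) (n : ℕ) : Submodule K (ι → MvPolynomial σ K) :=
  homogeneousVectors ι σ K n ⊓ (syzygies g).restrictScalars K

lemma mem_homogeneousSyzygies {g ρ : ι → MvPolynomial σ K} {n : ℕ} :
    ρ ∈ homogeneousSyzygies g n ↔ IsHomogeneousVec ρ n ∧ ρ ∈ syzygies g := by
  rw [homogeneousSyzygies, Submodule.mem_inf, mem_homogeneousVectors, Submodule.restrictScalars_mem]

instance finiteDimensional_homogeneousSyzygies [Finite σ] (g : ι → MvPolynomial σ K) (n : ℕ) :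
    FiniteDimensional K (homogeneousSyzygies g n) :=
  Submodule.finiteDimensional_of_le (inf_le_left : _ ≤ homogeneousVectors ι σ K n)

lemma homogeneousMultiples_le_homogeneousSyzygies {g ρ : ι → MvPolynomial σ K} {k : ℕ}
    (hρ : ρ ∈ syzygies g) (hρk : IsHomogeneousVec ρ k) (n : ℕ) :
    homogeneousMultiples ρ n ≤ homogeneousSyzygies g (n + k) := by
  rintro _ ⟨p, hp, rfl⟩
  exact mem_homogeneousSyzygies.2 ⟨hρk.smul hp, (syzygies g).smul_mem p hρ⟩

/-- The Hilbert function of `S ⧸ I`, for `S` a polynomial ring over a field `K`: its value at `k` is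
the `K`-dimension of the image of the forms of degree `k`. -/
def hilbertFunction (I : Ideal (MvPolynomial σ K)) (k : ℕ) : ℕ :=
  finrank K ((homogeneousSubmodule σ K k).map (Submodule.mkQ (I.restrictScalars K)))

lemma homogeneousSubmodule_inf_span_range {g : ι → MvPolynomial σ K} {k : ℕ}
    (hg : IsHomogeneousVec g k) (n : ℕ) :
    homogeneousSubmodule σ K (n + k) ⊓ (Ideal.span (Set.range g)).restrictScalars K =
      (homogeneousVectors ι σ K n).map
        ((Fintype.linearCombination (MvPolynomial σ K) g).restrictScalars K) := by
  ext p
  constructor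
  · rintro ⟨hp, hpg⟩
    obtain ⟨v, rfl⟩ := Ideal.mem_span_range_iff_exists_fun.1 hpg
    refine ⟨vecComponent n v, mem_homogeneousVectors.2 (isHomogeneousVec_vecComponent n v), ?_⟩
    exact (homogeneousComponent_add_dotProduct hg n v).symm.trans (homogeneousComponent_eq_self hp)
  · rintro ⟨v, hv, rfl⟩
    refine ⟨?_, Ideal.mem_span_range_iff_exists_fun.2 ⟨v, rfl⟩⟩
    exact IsHomogeneous.sum _ _ _ fun i _ => (mem_homogeneousVectors.1 hv i).mul (hg i)

lemma hilbertFunction_span_range_add [Finite σ] {g : ι → MvPolynomial σ K} {k : ℕ}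
    (hg : IsHomogeneousVec g k) (n : ℕ) :
    hilbertFunction (Ideal.span (Set.range g)) (n + k) +
        Fintype.card ι * finrank K (homogeneousSubmodule σ K n) =
      finrank K (homogeneousSubmodule σ K (n + k)) + finrank K (homogeneousSyzygies g n) := by
  have hquotient := finrank_map_add_finrank_inf_ker
    (Submodule.mkQ ((Ideal.span (Set.range g)).restrictScalars K))
    (homogeneousSubmodule σ K (n + k))
  rw [Submodule.ker_mkQ, homogeneousSubmodule_inf_span_range hg] at hquotient
  have hrelations := finrank_map_add_finrank_inf_ker
    ((Fintype.linearCombination (MvPolynomial σ K) g).restrictScalars K)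
    (homogeneousVectors ι σ K n)
  rw [finrank_homogeneousVectors] at hrelations
  change _ + finrank K (homogeneousSyzygies g n) = _ at hrelations
  rw [← hrelations, ← hquotient, hilbertFunction]
  ring

end GradedPieces

section FreeSyzygies

variable {σ K : Type*} [Field K] {g ρ : Fin 3 → MvPolynomial σ K} {e₁ e₂ : ℕ}

/-- The syzygy module of `g` is free with a homogeneous basis of two elements, of degrees `d₁` and
`d₂`. -/
def HasFreeSyzygies (g : Fin 3 → MvPolynomial σ K) (d₁ d₂ : ℕ) : Prop :=
  ∃ ρ₁ ρ₂ : Fin 3 → MvPolynomial σ K,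
    ρ₁ ∈ syzygies g ∧ ρ₂ ∈ syzygies g ∧ IsHomogeneousVec ρ₁ d₁ ∧ IsHomogeneousVec ρ₂ d₂ ∧
    (∀ θ ∈ syzygies g, ∃ a b : MvPolynomial σ K, θ = a • ρ₁ + b • ρ₂) ∧
    ∀ a b : MvPolynomial σ K, a • ρ₁ + b • ρ₂ = 0 → a = 0 ∧ b = 0

lemma homogeneousSyzygies_inf_ker_cross (hρ : ρ ∈ syzygies g) (hρe : IsHomogeneousVec ρ e₁)
    (hρp : IsPrimitiveVec ρ) (n : ℕ) :
    homogeneousSyzygies g (n + e₁) ⊓ LinearMap.ker ((crossProduct ρ).restrictScalars K) =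
      homogeneousMultiples ρ n := by
  apply le_antisymm
  · rintro θ ⟨hθ, hρθ⟩
    obtain ⟨p, rfl⟩ := hρp.exists_eq_smul_of_cross_eq_zero hρθ
    exact smul_mem_homogeneousMultiples_of_isHomogeneousVec hρe (mem_homogeneousSyzygies.1 hθ).1
  · refine le_inf (homogeneousMultiples_le_homogeneousSyzygies hρ hρe n) ?_
    rintro _ ⟨p, -, rfl⟩
    change ρ ⨯₃ (p • ρ) = 0
    rw [map_smul, cross_self, smul_zero]

lemma map_cross_homogeneousSyzygies_le (hg : IsHomogeneousVec g (e₁ + e₂))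
    (hgp : IsPrimitiveVec g) (hρ : ρ ∈ syzygies g) (hρe : IsHomogeneousVec ρ e₁) (m : ℕ) :
    (homogeneousSyzygies g (m + e₂ + e₁)).map ((crossProduct ρ).restrictScalars K) ≤
      homogeneousMultiples g (m + e₁) := by
  rintro _ ⟨θ, hθ, rfl⟩
  obtain ⟨hθh, hθg⟩ := mem_homogeneousSyzygies.1 hθ
  obtain ⟨p, hp⟩ := exists_cross_eq_smul_of_mem_syzygies hgp hρ hθg
  have hdegree : e₁ + (m + e₂ + e₁) = m + e₁ + (e₁ + e₂) := by ring
  change ρ ⨯₃ θ ∈ _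
  rw [hp]
  exact smul_mem_homogeneousMultiples_of_isHomogeneousVec hg (hp ▸ hdegree ▸ hρe.cross hθh)

lemma finrank_add_finrank_map_cross [Finite σ] (hρ : ρ ∈ syzygies g) (hρe : IsHomogeneousVec ρ e₁)
    (hρp : IsPrimitiveVec ρ) (n : ℕ) :
    finrank K (homogeneousSubmodule σ K n) +
        finrank K ((homogeneousSyzygies g (n + e₁)).map ((crossProduct ρ).restrictScalars K)) =
      finrank K (homogeneousSyzygies g (n + e₁)) := by
  rw [← finrank_homogeneousMultiples hρp.ne_zero, ← homogeneousSyzygies_inf_ker_cross hρ hρe hρp,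
    add_comm, finrank_map_add_finrank_inf_ker]

lemma finrank_homogeneousSyzygies_le [Finite σ] (hg : IsHomogeneousVec g (e₁ + e₂))
    (hgp : IsPrimitiveVec g) (hρ : ρ ∈ syzygies g) (hρe : IsHomogeneousVec ρ e₁)
    (hρp : IsPrimitiveVec ρ) (m : ℕ) :
    finrank K (homogeneousSyzygies g (m + e₂ + e₁)) ≤
      finrank K (homogeneousSubmodule σ K (m + e₂)) +
        finrank K (homogeneousSubmodule σ K (m + e₁)) := by
  rw [← finrank_add_finrank_map_cross hρ hρe hρp,
    ← finrank_homogeneousMultiples hgp.ne_zero (m + e₁)]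
  gcongr
  exact Submodule.finrank_mono (map_cross_homogeneousSyzygies_le hg hgp hρ hρe m)

lemma hasFreeSyzygies_of_mem_range_cross (hg : IsHomogeneousVec g (e₁ + e₂))
    (hgp : IsPrimitiveVec g) (hρ : ρ ∈ syzygies g) (hρe : IsHomogeneousVec ρ e₁)
    (hρp : IsPrimitiveVec ρ) (h : g ∈ LinearMap.range (crossProduct ρ)) :
    HasFreeSyzygies g e₁ e₂ := by
  obtain ⟨η, hη⟩ := h
  have hcross : ρ ⨯₃ vecComponent e₂ η = g := by
    rw [← vecComponent_add_cross hρe, hη, add_comm, hg.vecComponent_eq_self]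
  have hηg : vecComponent e₂ η ∈ syzygies g := by
    simpa only [hcross] using mem_syzygies_cross_right ρ (vecComponent e₂ η)
  exact ⟨ρ, vecComponent e₂ η, hρ, hηg, hρe, isHomogeneousVec_vecComponent e₂ η,
    fun θ => exists_eq_smul_add_smul_of_cross_eq hgp hρp hρ hcross,
    fun a b => eq_zero_of_smul_add_smul_eq_zero_of_cross_ne_zero (hcross.trans_ne hgp.ne_zero)⟩

lemma HasFreeSyzygies.le_finrank_homogeneousSyzygies [Finite σ]
    (hfree : HasFreeSyzygies g e₁ e₂) (m : ℕ) :
    finrank K (homogeneousSubmodule σ K (m + e₂)) + finrank K (homogeneousSubmodule σ K (m + e₁)) ≤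
      finrank K (homogeneousSyzygies g (m + e₂ + e₁)) := by
  obtain ⟨ρ₁, ρ₂, hρ₁, hρ₂, hdeg₁, hdeg₂, -, hindep⟩ := hfree
  have hρ₁0 : ρ₁ ≠ 0 := by
    rintro rfl
    exact one_ne_zero (hindep 1 0 (by simp)).1
  have hρ₂0 : ρ₂ ≠ 0 := by
    rintro rfl
    exact one_ne_zero (hindep 0 1 (by simp)).2
  have hdisjoint : homogeneousMultiples ρ₁ (m + e₂) ⊓ homogeneousMultiples ρ₂ (m + e₁) = ⊥ := by
    refine (Submodule.eq_bot_iff _).2 ?_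
    rintro _ ⟨⟨a, -, rfl⟩, b, -, hb⟩
    have hrelation : a • ρ₁ + (-b) • ρ₂ = 0 := by
      rw [neg_smul, ← sub_eq_add_neg, sub_eq_zero]
      exact hb.symm
    rw [(hindep a (-b) hrelation).1, map_zero]
  have hsum := Submodule.finrank_sup_add_finrank_inf_eq (homogeneousMultiples ρ₁ (m + e₂))
    (homogeneousMultiples ρ₂ (m + e₁))
  rw [hdisjoint, finrank_bot, add_zero, finrank_homogeneousMultiples hρ₁0,
    finrank_homogeneousMultiples hρ₂0] at hsum
  rw [← hsum]
  refine Submodule.finrank_mono (sup_le ?_ ?_)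
  · exact homogeneousMultiples_le_homogeneousSyzygies hρ₁ hdeg₁ (m + e₂)
  · rw [add_right_comm]
    exact homogeneousMultiples_le_homogeneousSyzygies hρ₂ hdeg₂ (m + e₁)

end FreeSyzygies

section DuPlessisWall

variable {K : Type*} [Field K] {g ρ : Fin 3 → MvPolynomial (Fin 3) K} {e₁ e₂ : ℕ}

lemma mem_range_cross_of_finrank_homogeneousSyzygies_eq (hg : IsHomogeneousVec g (e₁ + e₂))
    (hgp : IsPrimitiveVec g) (hρ : ρ ∈ syzygies g) (hρe : IsHomogeneousVec ρ e₁)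
    (hρp : IsPrimitiveVec ρ) {m : ℕ}
    (h : finrank K (homogeneousSyzygies g (m + e₂ + e₁)) =
      finrank K (homogeneousSubmodule (Fin 3) K (m + e₂)) +
        finrank K (homogeneousSubmodule (Fin 3) K (m + e₁))) :
    g ∈ LinearMap.range (crossProduct ρ) := by
  have hmap : (homogeneousSyzygies g (m + e₂ + e₁)).map ((crossProduct ρ).restrictScalars K) =
      homogeneousMultiples g (m + e₁) := by
    refine Submodule.eq_of_le_of_finrank_eq (map_cross_homogeneousSyzygies_le hg hgp hρ hρe m) ?_
    rw [finrank_homogeneousMultiples hgp.ne_zero]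
    exact add_left_cancel ((finrank_add_finrank_map_cross hρ hρe hρp _).trans h)
  have hpow (i : Fin 3) : (X i ^ (m + e₁) : MvPolynomial (Fin 3) K) • g ∈
      LinearMap.range (crossProduct ρ) := by
    obtain ⟨θ, -, hθ⟩ := hmap.ge (smul_mem_homogeneousMultiples g (isHomogeneous_X_pow i (m + e₁)))
    exact ⟨θ, hθ⟩
  exact mem_range_cross_of_smul_mem_range hρp (pow_ne_zero _ (X_ne_zero 0))
    (isRelPrime_X_pow (by decide : (0 : Fin 3) ≠ 1) _ _)
    (fun _ => mem_span_X_pow_pair_of_X_pow_mul_mem (by decide) (by decide))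
    (hpow 0) (hpow 1) (hpow 2)

lemma finrank_homogeneousSyzygies_eq_iff (hg : IsHomogeneousVec g (e₁ + e₂))
    (hgp : IsPrimitiveVec g) (hρ : ρ ∈ syzygies g) (hρe : IsHomogeneousVec ρ e₁)
    (hρp : IsPrimitiveVec ρ) (m : ℕ) :
    finrank K (homogeneousSyzygies g (m + e₂ + e₁)) =
      finrank K (homogeneousSubmodule (Fin 3) K (m + e₂)) +
        finrank K (homogeneousSubmodule (Fin 3) K (m + e₁)) ↔ HasFreeSyzygies g e₁ e₂ :=
  ⟨fun h => hasFreeSyzygies_of_mem_range_cross hg hgp hρ hρe hρp <|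
      mem_range_cross_of_finrank_homogeneousSyzygies_eq hg hgp hρ hρe hρp h,
    fun hfree => (finrank_homogeneousSyzygies_le hg hgp hρ hρe hρp m).antisymm <|
      hfree.le_finrank_homogeneousSyzygies m⟩

lemma two_mul_finrank_homogeneousSubmodule (n : ℕ) :
    2 * finrank K (homogeneousSubmodule (Fin 3) K n) = (n + 1) * (n + 2) := by
  rw [finrank_homogeneousSubmodule, Fintype.card_fin, two_mul_multichoose_three]

lemma hilbertFunction_sub_eq_finrank_homogeneousSyzygies_sub (hg : IsHomogeneousVec g (e₁ + e₂))
    (m : ℕ) :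
    (hilbertFunction (Ideal.span (Set.range g)) (m + e₂ + e₁ + (e₁ + e₂)) : ℤ) -
        (((e₁ : ℤ) + e₂) ^ 2 - e₁ * e₂) =
      finrank K (homogeneousSyzygies g (m + e₂ + e₁)) -
        (finrank K (homogeneousSubmodule (Fin 3) K (m + e₂)) +
          finrank K (homogeneousSubmodule (Fin 3) K (m + e₁))) := by
  have hhilbert := hilbertFunction_span_range_add hg (m + e₂ + e₁)
  have hdim := two_mul_finrank_homogeneousSubmodule (K := K)
  have h₁ := hdim (m + e₁)
  have h₂ := hdim (m + e₂)
  have h₃ := hdim (m + e₂ + e₁)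
  have h₄ := hdim (m + e₂ + e₁ + (e₁ + e₂))
  rw [Fintype.card_fin] at hhilbert
  zify at hhilbert h₁ h₂ h₃ h₄
  refine mul_left_cancel₀ two_ne_zero ?_
  linear_combination 2 * hhilbert - 3 * h₃ + h₄ + h₁ + h₂

theorem thm_duPlessis_Wall_general (hg : IsHomogeneousVec g (e₁ + e₂)) (hgp : IsPrimitiveVec g)
    (hρ : ρ ∈ syzygies g) (hρe : IsHomogeneousVec ρ e₁) (hρp : IsPrimitiveVec ρ) {k : ℕ}
    (hk : 2 * (e₁ + e₂) ≤ k) :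
    (hilbertFunction (Ideal.span (Set.range g)) k : ℤ) ≤ ((e₁ : ℤ) + e₂) ^ 2 - e₁ * e₂ ∧
    ((hilbertFunction (Ideal.span (Set.range g)) k : ℤ) = ((e₁ : ℤ) + e₂) ^ 2 - e₁ * e₂ ↔
      HasFreeSyzygies g e₁ e₂) := by
  obtain ⟨m, rfl⟩ : ∃ m, k = m + e₂ + e₁ + (e₁ + e₂) := ⟨k - 2 * (e₁ + e₂), by omega⟩
  rw [← sub_nonpos, ← sub_eq_zero, hilbertFunction_sub_eq_finrank_homogeneousSyzygies_sub hg m,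
    ← Nat.cast_add, sub_nonpos, sub_eq_zero, Nat.cast_le, Nat.cast_inj]
  exact ⟨finrank_homogeneousSyzygies_le hg hgp hρ hρe hρp m,
    finrank_homogeneousSyzygies_eq_iff hg hgp hρ hρe hρp m⟩

end DuPlessisWall

/-- **Theorem 1.1 (du Plessis–Wall).** For a reduced plane curve `C : f = 0` with
`e1 = mdr(f) > 0`, `e2 = d - 1 - e1` and `2e1 ≤ d - 1`, the global Tjurina number satisfies
`τ(C) ≤ (e1 + e2)² - e1·e2`, with equality iff `C` is a free curve. -/
theorem thm_duPlessis_Wall (f : S3) (d e1 e2 : ℕ)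
    (hd : 1 ≤ d) (hf : f.IsHomogeneous d) (hred : Squarefree f)
    (hmdr : ∃ ρ ∈ AR3 f, ρ ≠ 0 ∧ VecHomog3 ρ e1)
    (hmdrmin : ∀ ρ ∈ AR3 f, ∀ q : ℕ, ρ ≠ 0 → VecHomog3 ρ q → e1 ≤ q)
    (he1pos : 0 < e1) (h2e1 : 2 * e1 ≤ d - 1) (he2 : e1 + e2 + 1 = d)
    (τ : ℕ) (hτ : ∃ N : ℕ, ∀ k : ℕ, N ≤ k → milnor3 f k = τ) :
    (τ : ℤ) ≤ ((e1 : ℤ) + e2) ^ 2 - (e1 : ℤ) * e2 ∧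
    ((τ : ℤ) = ((e1 : ℤ) + e2) ^ 2 - (e1 : ℤ) * e2 ↔ IsFreeCurveWith f e1 e2) := by
  have hgrad : IsHomogeneousVec (fun i => pderiv i f) (e1 + e2) := fun i => by
    simpa only [← he2, Nat.add_sub_cancel] using hf.pderiv (i := i)
  obtain ⟨ρ, hρ, hρ0, hρe⟩ := hmdr
  obtain ⟨N, hN⟩ := hτ
  rw [← hN (N + 2 * (e1 + e2)) le_self_add]
  exact thm_duPlessis_Wall_general hgrad (isPrimitiveVec_pderiv (by omega) hf hred) hρ hρe
    (isPrimitiveVec_of_forall_le_degree hgrad hρ hρ0 hρe hmdrmin) le_add_self
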